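/- Let μ ∈ ℝ, η ≥ 0, and suppose (γ0, γ1, γ2) ∈ ℝ³ is a solution of the system S1(μ,η). Then γ0 + γ1 + γ2 = 0 and γ1² = (1/2)(1+η)(1−μ); in particular no real solution of S1(μ,η) exists when μ > 1. -/

import Mathlib

/-- The `k = δ = 1` reduced system `S1(μ,η)` for `(γ0, γ1, γ2)`. -/
def S1 (μ η γ0 γ1 γ2 : ℝ) : Prop :=
  2 * γ0 * γ2 = -μ ∧
  2 * γ0 * γ1 + 2 * γ1 * γ2 = η * μ - η + μ - 1 ∧
  γ0 ^ 2 + γ1 ^ 2 + γ2 ^ 2 = 1 - η * μ + η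

namespace S1

variable {μ η γ0 γ1 γ2 : ℝ}

theorem add_add_eq_zero (h : S1 μ η γ0 γ1 γ2) : γ0 + γ1 + γ2 = 0 := by
  obtain ⟨houter, hmiddle, hsquares⟩ := h
  refine sq_eq_zero_iff.mp ?_
  calc (γ0 + γ1 + γ2) ^ 2
      = 2 * γ0 * γ2 + (2 * γ0 * γ1 + 2 * γ1 * γ2) + (γ0 ^ 2 + γ1 ^ 2 + γ2 ^ 2) := by ring
    _ = -μ + (η * μ - η + μ - 1) + (1 - η * μ + η) := by rw [houter, hmiddle, hsquares]
    _ = 0 := by ring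

theorem sq_middle_eq (h : S1 μ η γ0 γ1 γ2) : γ1 ^ 2 = (1 / 2) * (1 + η) * (1 - μ) := by
  have hγ1 : γ1 = -(γ0 + γ2) := by linarith [h.add_add_eq_zero]
  obtain ⟨-, hmiddle, -⟩ := h
  calc γ1 ^ 2 = γ1 * -(γ0 + γ2) := by rw [sq, ← hγ1]
    _ = -(1 / 2) * (2 * γ0 * γ1 + 2 * γ1 * γ2) := by ring
    _ = -(1 / 2) * (η * μ - η + μ - 1) := by rw [hmiddle]
    _ = (1 / 2) * (1 + η) * (1 - μ) := by ring

theorem le_one (h : S1 μ η γ0 γ1 γ2) (hη : -1 < η) : μ ≤ 1 := by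
  have hcoeff : 0 < (1 / 2) * (1 + η) := by linarith
  have hprod : 0 ≤ (1 / 2) * (1 + η) * (1 - μ) := h.sq_middle_eq ▸ sq_nonneg γ1
  exact sub_nonneg.mp ((mul_nonneg_iff_of_pos_left hcoeff).mp hprod)

end S1

theorem S1_necessary_conditions_general (μ η : ℝ) :
    (∀ γ0 γ1 γ2 : ℝ, S1 μ η γ0 γ1 γ2 →
        γ0 + γ1 + γ2 = 0 ∧ γ1 ^ 2 = (1 / 2) * (1 + η) * (1 - μ)) ∧
    (-1 < η → 1 < μ → ¬ ∃ γ0 γ1 γ2 : ℝ, S1 μ η γ0 γ1 γ2) :=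
  ⟨fun _ _ _ h ↦ ⟨h.add_add_eq_zero, h.sq_middle_eq⟩,
    fun hη hμ ⟨_, _, _, h⟩ ↦ hμ.not_ge (h.le_one hη)⟩

/-- **Necessary conditions on solutions of `S1(μ,η)` and the weak coupling condition.**
Any real solution `(γ0,γ1,γ2)` of `S1(μ,η)` with `η ≥ 0` satisfies `γ0 + γ1 + γ2 = 0`
and `γ1² = (1/2)(1+η)(1-μ)`; in particular no real solution exists when `μ > 1`. -/
theorem S1_necessary_conditions (μ η : ℝ) (hη : 0 ≤ η) :
    (∀ γ0 γ1 γ2 : ℝ, S1 μ η γ0 γ1 γ2 →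
        γ0 + γ1 + γ2 = 0 ∧ γ1 ^ 2 = (1 / 2) * (1 + η) * (1 - μ)) ∧
    (1 < μ → ¬ ∃ γ0 γ1 γ2 : ℝ, S1 μ η γ0 γ1 γ2) := by
  exact (S1_necessary_conditions_general μ η).imp_right fun h ↦ h (by linarith)
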